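/- arXiv:2603.18392 — 2 statements merged into one kernel-verified Lean document; each statement's English description precedes it below -/
import Mathlib

section
/- Let m ≥ 2, let i be an even index with 1 < i < 2m, and let n ∈ ℤ. Then the two vectors v = (0,…,0, 2n, 1,…,1) ∈ ℤ^{2m} (whose first i−1 entries are 0, whose i-th entry is 2n, and whose last 2m−i entries are 1) and v' = (0,…,0, n, 1−n, 1,…,1) ∈ ℤ^{2m} (whose first i−1 entries are 0, whose i-th entry is n, whose (i+1)-st entry is 1−n, and whose last 2m−i−1 entries are 1) are Hurwitz equivalent. In particular Δ(v) = Δ(v') = −2n, d(v) = d(v') = 1, and M(v) = M(v') = {0,…,0 (i times), 1,…,1 (2m−i times) (mod 2)}. -/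
/-- The alternating sum `Δ(v) = Σ (−1)^{i−1} v_i` (0-indexed: `Σ (−1)^i v_i`). -/
def altSum {n : ℕ} (v : Fin n → ℤ) : ℤ := ∑ i : Fin n, (-1 : ℤ) ^ (i : ℕ) * v i

/-- A vector is trivial if all its entries are equal. -/
def IsTrivialVec {n : ℕ} (v : Fin n → ℤ) : Prop := ∀ i j, v i = v j

/-- `d(v)`: the (nonnegative) greatest common divisor of all differences of entries. -/
def dval {n : ℕ} (v : Fin n → ℤ) : ℕ :=
  (Finset.univ : Finset (Fin n × Fin n)).gcd fun p => (v p.1 - v p.2).natAbs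

/-- `k(v)`: the 2-adic valuation of `d(v)`. -/
def kval {n : ℕ} (v : Fin n → ℤ) : ℕ := padicValNat 2 (dval v)

/-- The multiset of residues of the entries of `v` modulo `2d`. -/
def MresMod {n : ℕ} (v : Fin n → ℤ) (d : ℕ) : Multiset ℤ :=
  (Finset.univ.val : Multiset (Fin n)).map fun i => v i % (2 * (d : ℤ))

/-- `M(v)`: the multiset of residues of the entries of `v` modulo `2d(v)`. -/
def Mres {n : ℕ} (v : Fin n → ℤ) : Multiset ℤ := MresMod v (dval v)

/-- `v'` is obtained from `v` by an elementary Hurwitz move `σ_i`: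
`(v_i, v_{i+1}) ↦ (v_{i+1}, 2v_{i+1} − v_i)`, all other entries unchanged. -/
def IsHurwitzMove {n : ℕ} (v v' : Fin n → ℤ) : Prop :=
  ∃ (i : ℕ) (hi : i + 1 < n),
    v' ⟨i, Nat.lt_of_succ_lt hi⟩ = v ⟨i + 1, hi⟩ ∧
    v' ⟨i + 1, hi⟩ = 2 * v ⟨i + 1, hi⟩ - v ⟨i, Nat.lt_of_succ_lt hi⟩ ∧
    ∀ j : Fin n, (j : ℕ) ≠ i → (j : ℕ) ≠ i + 1 → v' j = v j

/-- Hurwitz equivalence: a finite sequence of elementary Hurwitz moves and inverses. -/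
def HurwitzEquiv {n : ℕ} (v w : Fin n → ℤ) : Prop :=
  Relation.ReflTransGen (fun a b => IsHurwitzMove a b ∨ IsHurwitzMove b a) v w

theorem HEq_symm' {n : ℕ} {v w : Fin n → ℤ} (h : HurwitzEquiv v w) : HurwitzEquiv w v := by
  unfold HurwitzEquiv at *
  induction h with
  | refl => exact Relation.ReflTransGen.refl
  | tail _ hb ih => exact Relation.ReflTransGen.head hb.symm ih

theorem shiftNat {n : ℕ} (p : ℕ) (hp : p + 1 < n) (k : ℕ) : ∀ (u w : Fin n → ℤ),
    w ⟨p, by omega⟩ = u ⟨p, by omega⟩ + k * (u ⟨p + 1, hp⟩ - u ⟨p, by omega⟩) →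
    w ⟨p + 1, hp⟩ = u ⟨p + 1, hp⟩ + k * (u ⟨p + 1, hp⟩ - u ⟨p, by omega⟩) →
    (∀ j : Fin n, (j : ℕ) ≠ p → (j : ℕ) ≠ p + 1 → w j = u j) → HurwitzEquiv u w := by
  induction k with
  | zero =>
    intro u w h1 h2 h3
    have : u = w := by
      funext j
      by_cases hj : (j : ℕ) = p
      · have : j = ⟨p, by omega⟩ := Fin.ext hj
        rw [this, h1]; simp
      by_cases hj' : (j : ℕ) = p + 1
      · have : j = ⟨p + 1, hp⟩ := Fin.ext hj'
        rw [this, h2]; simp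
      exact (h3 j hj hj').symm
    subst this
    exact Relation.ReflTransGen.refl
  | succ k ih =>
    intro u w h1 h2 h3
    let x : Fin n → ℤ := fun j => if (j : ℕ) = p then u ⟨p + 1, hp⟩ else
      if (j : ℕ) = p + 1 then 2 * u ⟨p + 1, hp⟩ - u ⟨p, by omega⟩ else u j
    have hx1 : x ⟨p, by omega⟩ = u ⟨p + 1, hp⟩ := by simp [x]
    have hx2 : x ⟨p + 1, hp⟩ = 2 * u ⟨p + 1, hp⟩ - u ⟨p, by omega⟩ := by simp [x]
    have hx3 : ∀ j : Fin n, (j : ℕ) ≠ p → (j : ℕ) ≠ p + 1 → x j = u j := by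
      intro j a b; simp [x, a, b]
    refine Relation.ReflTransGen.head (Or.inl ⟨p, hp, hx1, hx2, hx3⟩) (ih x w ?_ ?_ ?_)
    · rw [h1, hx1, hx2]; push_cast; ring
    · rw [h2, hx1, hx2]; push_cast; ring
    · intro j a b; rw [h3 j a b, hx3 j a b]

theorem shiftInt {n : ℕ} (p : ℕ) (hp : p + 1 < n) (k : ℤ) (u w : Fin n → ℤ)
    (h1 : w ⟨p, by omega⟩ = u ⟨p, by omega⟩ + k * (u ⟨p + 1, hp⟩ - u ⟨p, by omega⟩))
    (h2 : w ⟨p + 1, hp⟩ = u ⟨p + 1, hp⟩ + k * (u ⟨p + 1, hp⟩ - u ⟨p, by omega⟩))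
    (h3 : ∀ j : Fin n, (j : ℕ) ≠ p → (j : ℕ) ≠ p + 1 → w j = u j) : HurwitzEquiv u w := by
  obtain ⟨a, rfl | rfl⟩ := k.eq_nat_or_neg
  · exact shiftNat p hp a u w h1 h2 h3
  · refine HEq_symm' (shiftNat p hp a w u ?_ ?_ fun j x y => (h3 j x y).symm)
    · rw [h1, h2]; ring
    · rw [h1, h2]; ring

theorem alt_pair (f : ℕ → ℤ) (N : ℕ) : ∑ j ∈ Finset.range (2 * N), (-1 : ℤ) ^ j * f j =
    ∑ j ∈ Finset.range N, (f (2 * j) - f (2 * j + 1)) := by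
  induction N with
  | zero => simp
  | succ N ih =>
    rw [show 2 * (N + 1) = 2 * N + 1 + 1 by ring, Finset.sum_range_succ, Finset.sum_range_succ,
      Finset.sum_range_succ, ih, pow_succ, pow_mul]
    simp; ring

theorem map_split (n i : ℕ) (hi : i ≤ n) :
    ((Finset.univ.val : Multiset (Fin n)).map fun (j : Fin _) => if (j : ℕ) < i then (0 : ℤ) else 1) =
    Multiset.replicate i (0 : ℤ) + Multiset.replicate (n - i) (1 : ℤ) := by
  obtain ⟨k, rfl⟩ := Nat.exists_eq_add_of_le hi
  have : ((List.finRange (i + k)).map fun (j : Fin _) => if (j : ℕ) < i then (0 : ℤ) else 1) =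
      (List.range (i + k)).map fun j => if j < i then (0 : ℤ) else 1 := by
    rw [← List.map_coe_finRange_eq_range, List.map_map]; rfl
  change (((List.finRange (i + k)).map fun (j : Fin _) => if (j : ℕ) < i then (0 : ℤ) else 1 : List ℤ)
    : Multiset ℤ) = _
  rw [this, List.range_add, List.map_append, List.map_map, ← Multiset.coe_add]
  congr 1
  · rw [← Multiset.coe_replicate]
    congr 1
    rw [List.eq_replicate_iff]
    simp +contextual
  · rw [← Multiset.coe_replicate]
    congr 1
    rw [List.eq_replicate_iff]
    simp

theorem dval_dvd {n : ℕ} (v : Fin n → ℤ) (a b : Fin n) : (dval v : ℤ) ∣ v a - v b := by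
  rw [Int.natCast_dvd]
  exact Finset.gcd_dvd (f := fun p : Fin n × Fin n => (v p.1 - v p.2).natAbs)
    (Finset.mem_univ (a, b))

/-- For even i with 1 < i < 2m (1-indexed), the vectors
v = (0,…,0, 2n, 1,…,1) and v' = (0,…,0, n, 1−n, 1,…,1) are Hurwitz equivalent;
in particular Δ(v) = Δ(v') = −2n, d(v) = d(v') = 1, and
M(v) = M(v') = {0 (i times), 1 (2m−i times) (mod 2)}. -/
theorem stmt_16 (m : ℕ) (hm : 2 ≤ m) (i : ℕ) (hi1 : 1 < i) (hi2 : i < 2 * m)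
    (hie : Even i) (c : ℤ)
    (v v' : Fin (2 * m) → ℤ)
    (hv : ∀ j : Fin (2 * m), v j =
      if (j : ℕ) + 1 < i then 0 else if (j : ℕ) + 1 = i then 2 * c else 1)
    (hv' : ∀ j : Fin (2 * m), v' j =
      if (j : ℕ) + 1 < i then 0 else if (j : ℕ) + 1 = i then c
      else if (j : ℕ) + 1 = i + 1 then 1 - c else 1) :
    HurwitzEquiv v v' ∧
    altSum v = -2 * c ∧ altSum v' = -2 * c ∧
    dval v = 1 ∧ dval v' = 1 ∧
    Mres v = Multiset.replicate i (0 : ℤ) + Multiset.replicate (2 * m - i) (1 : ℤ) ∧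
    Mres v' = Multiset.replicate i (0 : ℤ) + Multiset.replicate (2 * m - i) (1 : ℤ) := by
  obtain ⟨a, ha⟩ := hie
  obtain ⟨q, rfl⟩ : ∃ q, i = q + 2 := ⟨i - 2, by omega⟩
  have hd : dval v = 1 := by
    have h := dval_dvd v ⟨q + 2, hi2⟩ ⟨0, by omega⟩
    rw [hv, hv] at h
    simp at h
    exact Nat.eq_one_of_dvd_one (by exact_mod_cast h)
  have hd' : dval v' = 1 := by
    have h := dval_dvd v' ⟨q + 2, hi2⟩ ⟨0, by omega⟩
    have h2 := dval_dvd v' ⟨q + 1, by omega⟩ ⟨0, by omega⟩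
    rw [hv', hv'] at h h2
    simp at h h2
    have h3 := dvd_add h h2
    simp at h3
    exact Nat.eq_one_of_dvd_one (by exact_mod_cast h3)
  refine ⟨?_, ?_, ?_, hd, hd', ?_, ?_⟩
  · let x : Fin (2 * m) → ℤ := fun j => if (j : ℕ) < q then 0 else if (j : ℕ) = q then -2 * c
      else if (j : ℕ) = q + 1 then 0 else 1
    let y : Fin (2 * m) → ℤ := fun j => if (j : ℕ) < q then 0 else if (j : ℕ) = q then -2 * c
      else if (j : ℕ) = q + 1 then -c else if (j : ℕ) = q + 2 then 1 - c else 1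
    have e1 : HurwitzEquiv v x := by
      refine shiftInt q (by omega) (-1) v x ?_ ?_ ?_
      · simp [hv, x]
      · simp [hv, x]
      · intro j h1 h2
        simp only [hv, x]
        split_ifs <;> first | rfl | omega
    have e2 : HurwitzEquiv x y := by
      refine shiftInt (q + 1) (by omega) (-c) x y ?_ ?_ ?_
      · simp [y, x]; split_ifs <;> first | omega | ring
      · simp [y, x]; split_ifs <;> first | omega | ring
      · intro j h1 h2
        simp only [y, x]
        split_ifs <;> first | rfl | omega
    have e3 : HurwitzEquiv y v' := by
      refine shiftInt q (by omega) 2 y v' ?_ ?_ ?_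
      · simp [hv', y]; ring
      · simp [hv', y]; ring
      · intro j h1 h2
        simp only [hv', y]
        split_ifs <;> first | rfl | omega
    exact (e1.trans e2).trans e3
  · unfold altSum
    simp only [hv]
    rw [Fin.sum_univ_eq_sum_range (fun j => (-1 : ℤ) ^ j *
      (if j + 1 < q + 2 then 0 else if j + 1 = q + 2 then 2 * c else 1)) (2 * m),
      alt_pair (fun j => if j + 1 < q + 2 then 0 else if j + 1 = q + 2 then 2 * c else 1),
      Finset.sum_eq_single (a - 1)]
    · split_ifs <;> first | omega | ring
    · intro j _ hj
      split_ifs <;> first | omega | ring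
    · intro h
      exact absurd (Finset.mem_range.2 (by omega)) h
  · unfold altSum
    simp only [hv']
    rw [Fin.sum_univ_eq_sum_range (fun j => (-1 : ℤ) ^ j *
      (if j + 1 < q + 2 then 0 else if j + 1 = q + 2 then c else
        if j + 1 = q + 2 + 1 then 1 - c else 1)) (2 * m),
      alt_pair (fun j => if j + 1 < q + 2 then 0 else if j + 1 = q + 2 then c else
        if j + 1 = q + 2 + 1 then 1 - c else 1)]
    have : ∀ j ∈ Finset.range m, ((if 2 * j + 1 < q + 2 then 0 else if 2 * j + 1 = q + 2 then c else
        if 2 * j + 1 = q + 2 + 1 then 1 - c else 1) -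
        (if 2 * j + 1 + 1 < q + 2 then 0 else if 2 * j + 1 + 1 = q + 2 then c else
        if 2 * j + 1 + 1 = q + 2 + 1 then 1 - c else 1)) =
        (if j = a - 1 then -c else 0) + (if j = a then -c else 0) := by
      intro j _
      split_ifs <;> first | omega | ring
    rw [Finset.sum_congr rfl this, Finset.sum_add_distrib, Finset.sum_ite_eq', Finset.sum_ite_eq',
      if_pos (Finset.mem_range.2 (by omega)), if_pos (Finset.mem_range.2 (by omega))]
    ring
  · rw [← map_split (2 * m) (q + 2) hi2.le]
    unfold Mres MresMod
    rw [hd]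
    refine Multiset.map_congr rfl fun j _ => ?_
    rw [hv]
    split_ifs <;> push_cast <;> omega
  · rw [← map_split (2 * m) (q + 2) hi2.le]
    unfold Mres MresMod
    rw [hd']
    rcases Int.emod_two_eq_zero_or_one c with hc | hc
    · refine Multiset.map_congr rfl fun j _ => ?_
      rw [hv']
      split_ifs <;> push_cast <;> omega
    · let e : Equiv.Perm (Fin (2 * m)) := Equiv.swap ⟨q + 1, by omega⟩ ⟨q + 2, hi2⟩
      have hu : (Finset.univ.val : Multiset (Fin (2 * m))).map e = Finset.univ.val := by
        have := congrArg Finset.val (Finset.map_univ_equiv e)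
        simpa using this
      conv_rhs => rw [← hu, Multiset.map_map]
      refine Multiset.map_congr rfl fun j _ => ?_
      rw [hv']
      simp only [Function.comp, e, Equiv.swap_apply_def, Fin.ext_iff]
      by_cases h1 : (j : ℕ) = q + 1
      · simp [h1]; omega
      by_cases h2 : (j : ℕ) = q + 2
      · simp [h2]; omega
      simp only [h1, h2, if_false]
      split_ifs <;> push_cast <;> omega
end

section
/- Let m ≥ 1 and let v, w ∈ ℤ^{2m} be nontrivial vectors that are Hurwitz equivalent. Then Δ(v) = Δ(w), d(v) = d(w), and M(v) = M(w). -/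
theorem dvd_dval_iff {n : ℕ} (v : Fin n → ℤ) (c : ℕ) :
    c ∣ dval v ↔ ∀ i j, (c : ℤ) ∣ v i - v j := by
  unfold dval
  rw [Finset.dvd_gcd_iff]
  constructor
  · intro h i j
    exact Int.natCast_dvd.mpr (h (i, j) (Finset.mem_univ _))
  · intro h p _
    exact Int.natCast_dvd.mp (h p.1 p.2)

theorem move_form {n : ℕ} {v v' : Fin n → ℤ} (h : IsHurwitzMove v v') :
    ∃ a b : Fin n, (b : ℕ) = a + 1 ∧ a ≠ b ∧ v' a = v b ∧ v' b = 2 * v b - v a ∧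
      ∀ j, j ≠ a → j ≠ b → v' j = v j := by
  obtain ⟨i, hi, h1, h2, h3⟩ := h
  refine ⟨⟨i, Nat.lt_of_succ_lt hi⟩, ⟨i + 1, hi⟩, rfl, ?_, h1, h2, ?_⟩
  · simp [Fin.ext_iff]
  · intro j ha hb
    refine h3 j ?_ ?_
    · simpa [Fin.ext_iff] using ha
    · simpa [Fin.ext_iff] using hb

theorem move_inv {n : ℕ} {v v' : Fin n → ℤ} (h : IsHurwitzMove v v') :
    altSum v = altSum v' ∧ dval v = dval v' ∧ Mres v = Mres v' := by
  obtain ⟨a, b, hab, hne, h1, h2, h3⟩ := move_form h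
  have hd : dval v = dval v' := by
    apply Nat.dvd_antisymm
    · rw [dvd_dval_iff]
      have H := (dvd_dval_iff v (dval v)).mp dvd_rfl
      have K : ∀ j, ((dval v : ℕ) : ℤ) ∣ v' j - v b := by
        intro j
        by_cases ja : j = a
        · subst ja; simp [h1]
        · by_cases jb : j = b
          · subst jb
            rw [h2]
            have := H j a
            obtain ⟨k, hk⟩ := this
            exact ⟨k, by linarith⟩
          · rw [h3 j ja jb]; exact H j b
      intro i j
      have := dvd_sub (K i) (K j)
      simpa using this
    · rw [dvd_dval_iff]
      have H := (dvd_dval_iff v' (dval v')).mp dvd_rfl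
      have K : ∀ j, ((dval v' : ℕ) : ℤ) ∣ v j - v b := by
        intro j
        by_cases ja : j = a
        · subst ja
          have := H b j
          rw [h1, h2] at this
          rw [← dvd_neg]
          obtain ⟨k, hk⟩ := this
          exact ⟨k, by linarith⟩
        · by_cases jb : j = b
          · subst jb; simp
          · rw [← h3 j ja jb, ← h1]; exact H j a
      intro i j
      have := dvd_sub (K i) (K j)
      simpa using this
  refine ⟨?_, hd, ?_⟩
  · unfold altSum
    rw [← sub_eq_zero, ← Finset.sum_sub_distrib,
      Finset.sum_eq_add a b hne (fun c _ hc => by rw [h3 c hc.1 hc.2]; ring)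
        (fun h => absurd (Finset.mem_univ _) h) (fun h => absurd (Finset.mem_univ _) h),
      h1, h2, hab, pow_succ]
    ring
  · unfold Mres MresMod
    rw [← hd]
    have key : ∀ j, v' j % (2 * (dval v : ℤ)) = v (Equiv.swap a b j) % (2 * (dval v : ℤ)) := by
      intro j
      by_cases ja : j = a
      · subst ja; simp [h1]
      · by_cases jb : j = b
        · subst jb
          rw [Equiv.swap_apply_right, h2]
          apply Int.ModEq.symm
          rw [Int.modEq_iff_dvd]
          have := mul_dvd_mul_left (2 : ℤ) ((dvd_dval_iff v (dval v)).mp dvd_rfl j a)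
          obtain ⟨k, hk⟩ := this
          exact ⟨k, by linarith⟩
        · rw [Equiv.swap_apply_of_ne_of_ne ja jb, h3 j ja jb]
    simp only [key]
    have hu : (Finset.univ.val : Multiset (Fin n)).map (Equiv.swap a b) = Finset.univ.val := by
      simp
    conv_lhs => rw [← hu, Multiset.map_map]
    rfl

/-- Hurwitz equivalent nontrivial vectors have the same Δ, d, and M. -/
theorem stmt_17 (m : ℕ) (hm : 1 ≤ m) (v w : Fin (2 * m) → ℤ)
    (hv : ¬ IsTrivialVec v) (hw : ¬ IsTrivialVec w)
    (h : HurwitzEquiv v w) :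
    altSum v = altSum w ∧ dval v = dval w ∧ Mres v = Mres w := by
  clear hv hw
  induction h with
  | refl => exact ⟨rfl, rfl, rfl⟩
  | tail _ hs ih =>
    obtain ⟨i1, i2, i3⟩ := ih
    rcases hs with hs | hs
    · obtain ⟨j1, j2, j3⟩ := move_inv hs
      exact ⟨i1.trans j1, i2.trans j2, i3.trans j3⟩
    · obtain ⟨j1, j2, j3⟩ := move_inv hs
      exact ⟨i1.trans j1.symm, i2.trans j2.symm, i3.trans j3.symm⟩
end
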